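/- Let f be a cellular automaton on A^ℤ and suppose that the restriction of f to ω̃(f) is equicontinuous (the family of iterates {f^t restricted to ω̃(f) : t ∈ ℕ} is equicontinuous). Then the language L(ω̃(f)) is a Σ⁰₁ (computably enumerable) set of words. -/

import Mathlib

open Filter Set Function

namespace Gls

variable {A : Type*}

/-- The left shift map on `A^ℤ`. -/
def shift (x : ℤ → A) : ℤ → A := fun i => x (i + 1)

/-- A cellular automaton: a continuous shift-commuting self-map of the full shift. -/
def IsCA [TopologicalSpace A] (f : (ℤ → A) → (ℤ → A)) : Prop :=
  Continuous f ∧ f ∘ shift = shift ∘ f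

/-- The set of limit points of the forward orbit of `x` under `f`. -/
def omegaSet [TopologicalSpace A] (f : (ℤ → A) → (ℤ → A)) (x : ℤ → A) : Set (ℤ → A) :=
  {y | MapClusterPt y atTop fun t => f^[t] x}

/-- The realm of attraction of `Y`. -/
def realm [TopologicalSpace A] (f : (ℤ → A) → (ℤ → A)) (Y : Set (ℤ → A)) : Set (ℤ → A) :=
  {x | omegaSet f x ⊆ Y}

/-- The generic limit set: the intersection of all closed sets whose realm is comeager. -/
def genLimitSet [TopologicalSpace A] (f : (ℤ → A) → (ℤ → A)) : Set (ℤ → A) :=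
  ⋂₀ {C | IsClosed C ∧ realm f C ∈ residual (ℤ → A)}

/-- The word `x_{[i, i+n)}` of length `n` read in the configuration `x` from position `i`. -/
def word (x : ℤ → A) (i : ℤ) (n : ℕ) : List A :=
  (List.range n).map fun k => x (i + k)

/-- The cylinder set `[w]_i`. -/
def cylinder (w : List A) (i : ℤ) : Set (ℤ → A) := {x | word x i w.length = w}

/-- The language of `X`: all finite words occurring in points of `X`. -/
def lang (X : Set (ℤ → A)) : Set (List A) :=
  {w | ∃ x ∈ X, ∃ i : ℤ, word x i w.length = w}


/-- The arithmetical hierarchy over `ℕ`: `NatSigma 0` is the class of computable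
predicates, and a predicate is `NatSigma (n+1)` (i.e. `Σ⁰ₙ₊₁`) if it is of the form
`{a | ∃ k, (a, k) ∈ R}` for a `Π⁰ₙ` relation `R` (i.e. a relation whose complement is `Σ⁰ₙ`). -/
def NatSigma : ℕ → (ℕ → Prop) → Prop
  | 0 => fun P => ComputablePred P
  | (n + 1) => fun P =>
      ∃ R : ℕ → Prop, NatSigma n (fun a => ¬ R a) ∧ ∀ a, P a ↔ ∃ k, R (Nat.pair a k)

/-- A set of words is `Σ⁰ₙ` if, identifying words with natural numbers via the canonical
computable encoding, it is a `Σ⁰ₙ` subset of `ℕ`. -/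
def SigmaLang {A : Type*} [Primcodable A] (n : ℕ) (P : Set (List A)) : Prop :=
  NatSigma n (fun m => ∃ w : List A, Encodable.encode w = m ∧ w ∈ P)

/-- A set of words is `Π⁰ₙ` if its complement is `Σ⁰ₙ`. -/
def PiLang {A : Type*} [Primcodable A] (n : ℕ) (P : Set (List A)) : Prop :=
  SigmaLang n {w | w ∉ P}

/-!
By compactness and shift invariance, equicontinuity on `ω̃(f)` gives `f^[t₁] = f^[t₂]` on `ω̃(f)`
for some `t₁ < t₂`. The sets where `f^[t₁]` and `f^[t₂]` agree on a finite window are clopen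
neighborhoods of `ω̃(f)`, so the orbit of a generic point ends up in each of them, and by Baire
category it does so uniformly on a neighborhood of a generic point. Hence generic points are
equicontinuity points of `f` on all of `A^ℤ`.

The central pattern `w` of an equicontinuity point is blocking: it determines the evolution of a
block of cells that is as wide as the radius of `f`, and so separates its two sides. Generic
points contain `w` arbitrarily far to the left and to the right, and the evolution between two
occurrences depends only on the pattern between them. Therefore a word occurs in `ω̃(f)` if and
only if it occurs infinitely often, at a fixed position, along the orbit of a spatially periodic
configuration whose period contains `w`. Such an orbit is that of a cyclic word, hence eventually
periodic, and the occurrence is certified by finite data.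
-/

open scoped Topology Uniformity

section Configurations

/-- The translation of `A^ℤ` by an arbitrary integer; `translate 1` is `shift`. -/
def translate (k : ℤ) (x : ℤ → A) : ℤ → A := fun i => x (i + k)

lemma translate_apply (k : ℤ) (x : ℤ → A) (i : ℤ) : translate k x i = x (i + k) := rfl

lemma translate_natCast (n : ℕ) : translate (n : ℤ) = (shift : (ℤ → A) → ℤ → A)^[n] := by
  induction n with
  | zero => funext x i; simp [translate_apply]
  | succ n ih =>
    funext x i
    rw [iterate_succ_apply', ← ih, shift, translate_apply, translate_apply]
    congr 1
    push_cast
    ring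

lemma leftInverse_translate_neg (k : ℤ) :
    LeftInverse (translate (-k) : (ℤ → A) → ℤ → A) (translate k) := fun x => by
  funext i
  simp only [translate_apply, neg_add_cancel_right]

lemma rightInverse_translate_neg (k : ℤ) :
    Function.RightInverse (translate (-k) : (ℤ → A) → ℤ → A) (translate k) := fun x => by
  funext i
  simp only [translate_apply, add_neg_cancel_right]

lemma continuous_translate [TopologicalSpace A] (k : ℤ) :
    Continuous (translate k : (ℤ → A) → ℤ → A) :=
  continuous_pi fun i => continuous_apply (i + k)

lemma isOpenMap_translate [TopologicalSpace A] (k : ℤ) :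
    IsOpenMap (translate k : (ℤ → A) → ℤ → A) :=
  .of_inverse (continuous_translate (-k)) (rightInverse_translate_neg k)
    (leftInverse_translate_neg k)

/-- The central pattern `x_{[-n, n]}` of a configuration, indexed from `0`. -/
def window (n : ℕ) (x : ℤ → A) : Fin (2 * n + 1) → A := fun k => x (k - n)

lemma window_eq_window_iff {n : ℕ} {x y : ℤ → A} :
    window n x = window n y ↔ EqOn x y (Icc (-n) n) := by
  refine ⟨fun h i hi => ?_, fun h => funext fun k => h ⟨by omega, by omega⟩⟩
  obtain ⟨hl, hu⟩ := mem_Icc.1 hi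
  have hk := congrFun h ⟨(i + n).toNat, by omega⟩
  simpa only [window, Int.toNat_of_nonneg (show 0 ≤ i + n by omega), add_sub_cancel_right] using hk

lemma continuous_window [TopologicalSpace A] (n : ℕ) :
    Continuous (window n : (ℤ → A) → Fin (2 * n + 1) → A) :=
  continuous_pi fun k => continuous_apply ((k : ℤ) - n)

lemma hasBasis_uniformity_window [UniformSpace A] [DiscreteUniformity A] :
    (𝓤 (ℤ → A)).HasBasis (fun _ : ℕ => True) fun n => {p | window n p.1 = window n p.2} := by
  refine ⟨fun U => ⟨fun hU => ?_, ?_⟩⟩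
  · rw [Pi.uniformity, DiscreteUniformity.eq_principal_setRelId] at hU
    simp only [comap_principal] at hU
    obtain ⟨I, hI, V, hV, rfl⟩ := mem_iInf.1 hU
    obtain ⟨n, hn⟩ : ∃ n : ℕ, ∀ i ∈ I, i ∈ Icc (-n : ℤ) n := by
      refine ⟨hI.toFinset.sup Int.natAbs, fun i hi => ?_⟩
      have := Finset.le_sup (f := Int.natAbs) (hI.mem_toFinset.2 hi)
      exact mem_Icc.2 (by omega)
    exact ⟨n, trivial, fun p hp => mem_iInter.2 fun i =>
      mem_principal.1 (hV i) (window_eq_window_iff.1 hp (hn i i.2))⟩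
  · rintro ⟨n, -, hn⟩
    have hproj (k : Fin (2 * n + 1)) :
        {p : (ℤ → A) × (ℤ → A) | p.1 (k - n) = p.2 (k - n)} ∈ 𝓤 (ℤ → A) :=
      Pi.uniformContinuous_proj (fun _ : ℤ => A) (k - n) (DiscreteUniformity.relId_mem_uniformity A)
    exact mem_of_superset (iInter_mem.2 hproj) fun p hp => hn (funext (mem_iInter.1 hp))

lemma hasBasis_nhds_window [UniformSpace A] [DiscreteUniformity A] (x : ℤ → A) :
    (𝓝 x).HasBasis (fun _ : ℕ => True) fun n => {y | window n x = window n y} :=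
  nhds_basis_uniformity' hasBasis_uniformity_window

end Configurations

section Words

-- `word` coerces the list `List.range n` to `List ℤ` before mapping over it.
lemma word_eq_map (x : ℤ → A) (i : ℤ) (n : ℕ) :
    word x i n = (List.range n).map fun k : ℕ => x (i + k) := by
  have hcast : (List.range n).flatMap (fun k : ℕ => [(k : ℤ)]) =
      (List.range n).map fun k : ℕ => (k : ℤ) := List.map_eq_flatMap.symm
  change List.map _ ((List.range n).flatMap fun k : ℕ => [(k : ℤ)]) = _
  rw [hcast, List.map_map]
  rfl

lemma length_word (x : ℤ → A) (i : ℤ) (n : ℕ) : (word x i n).length = n := by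
  rw [word_eq_map, List.length_map, List.length_range]

lemma word_eq_word_iff {x y : ℤ → A} {i j : ℤ} {n : ℕ} :
    word x i n = word y j n ↔ ∀ k < n, x (i + k) = y (j + k) := by
  simp only [word_eq_map, List.map_inj_left, List.mem_range]

lemma word_add (x : ℤ → A) (i : ℤ) (m n : ℕ) :
    word x i (m + n) = word x i m ++ word x (i + m) n := by
  simp only [word_eq_map, List.range_add, List.map_append, List.map_map, comp_def, Nat.cast_add,
    add_assoc]

lemma mem_cylinder_iff {x : ℤ → A} {w : List A} {i : ℤ} :
    x ∈ cylinder w i ↔ ∀ k (hk : k < w.length), x (i + k) = w[k] := by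
  rw [cylinder, mem_ofPred_eq, List.ext_get_iff]
  simp [word_eq_map]

lemma mem_cylinder_word_iff {x y : ℤ → A} {i j : ℤ} {n : ℕ} :
    x ∈ cylinder (word y j n) i ↔ ∀ k < n, x (i + k) = y (j + k) := by
  rw [cylinder, mem_ofPred_eq, length_word, word_eq_word_iff]

lemma mem_cylinder_congr {x y : ℤ → A} {w : List A} {i : ℤ}
    (h : EqOn x y (Ico i (i + w.length))) : x ∈ cylinder w i ↔ y ∈ cylinder w i := by
  have hword : word x i w.length = word y i w.length :=
    word_eq_word_iff.2 fun k hk => h ⟨by omega, by omega⟩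
  rw [cylinder, mem_ofPred_eq, mem_ofPred_eq, hword]

lemma translate_mem_cylinder_iff {k : ℤ} {x : ℤ → A} {w : List A} {i : ℤ} :
    translate k x ∈ cylinder w i ↔ x ∈ cylinder w (i + k) := by
  simp only [mem_cylinder_iff, translate_apply, add_right_comm]

lemma exists_mem_cylinder_eqOn (w : List A) (x : ℤ → A) (a : ℤ) :
    ∃ y ∈ cylinder w a, EqOn x y (Ico a (a + w.length))ᶜ := by
  refine ⟨fun i => if a ≤ i then w.getD (i - a).toNat (x i) else x i,
    mem_cylinder_iff.2 fun k hk => ?_, fun i hi => ?_⟩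
  · simp [hk]
  · grind

lemma isClopen_cylinder [TopologicalSpace A] [DiscreteTopology A] (w : List A) (i : ℤ) :
    IsClopen (cylinder w i) := by
  have hinter : cylinder w i = ⋂ k : Fin w.length, (fun x : ℤ → A => x (i + k)) ⁻¹' {w[k]} := by
    ext x
    simp [mem_cylinder_iff, Fin.forall_iff]
  rw [hinter]
  exact isClopen_iInter_of_finite fun k =>
    (isClopen_discrete _).preimage (continuous_apply (i + (k : ℤ)))

end Words

section CellularAutomata

variable {f : (ℤ → A) → ℤ → A}

lemma IsCA.commute_translate [TopologicalSpace A] (hf : IsCA f) (k : ℤ) :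
    Function.Commute f (translate k) := by
  have hnat (n : ℕ) : Function.Commute f (translate (n : ℤ)) := by
    have hshift : Function.Commute f shift := congrFun hf.2
    rw [translate_natCast]
    exact hshift.iterate_right n
  obtain ⟨n, rfl | rfl⟩ := k.eq_nat_or_neg
  · exact hnat n
  · exact (hnat n).inverses_right (rightInverse_translate_neg n) (leftInverse_translate_neg n)

lemma IsCA.iterate_translate [TopologicalSpace A] (hf : IsCA f) (t : ℕ) (k : ℤ) (x : ℤ → A) :
    f^[t] (translate k x) = translate k (f^[t] x) :=
  (hf.commute_translate k).iterate_left t x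

lemma IsCA.periodic_iterate [TopologicalSpace A] (hf : IsCA f) {x : ℤ → A} {k : ℤ}
    (hx : Periodic x k) (t : ℕ) : Periodic (f^[t] x) k :=
  congrFun ((hf.iterate_translate t k x).symm.trans (congrArg f^[t] (funext hx)))

/-- `φ` is a local rule of radius `r` for `f`: the cell `f x i` is computed by `φ` from the
pattern `x_{[i-r, i+r]}`. -/
def IsLocalRule (f : (ℤ → A) → ℤ → A) {r : ℕ} (φ : (Fin (2 * r + 1) → A) → A) : Prop :=
  ∀ x i, f x i = φ (window r (translate i x))

lemma IsCA.exists_isLocalRule [Finite A] [Nonempty A] [UniformSpace A] [DiscreteTopology A]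
    (hf : IsCA f) : ∃ (r : ℕ) (φ : (Fin (2 * r + 1) → A) → A), IsLocalRule f φ := by
  have hcont : UniformContinuous fun x => f x 0 :=
    CompactSpace.uniformContinuous_of_continuous ((continuous_apply 0).comp hf.1)
  obtain ⟨r, -, hr⟩ := hasBasis_uniformity_window.mem_iff.1
    (hcont (DiscreteUniformity.relId_mem_uniformity A))
  obtain ⟨φ, hφ⟩ := (factorsThrough_iff fun x => f x 0).1
    (show FactorsThrough (fun x => f x 0) (window r) from fun x y h => @hr (x, y) h)
  refine ⟨r, φ, fun x i => ?_⟩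
  calc f x i = translate i (f x) 0 := by rw [translate_apply, zero_add]
    _ = f (translate i x) 0 := by rw [(hf.commute_translate i).eq]
    _ = φ (window r (translate i x)) := congrFun hφ _

lemma IsLocalRule.apply_congr {r : ℕ} {φ : (Fin (2 * r + 1) → A) → A} (hφ : IsLocalRule f φ)
    {x y : ℤ → A} {i : ℤ} (h : EqOn x y (Icc (i - r) (i + r))) : f x i = f y i := by
  have hwindow : window r (translate i x) = window r (translate i y) :=
    window_eq_window_iff.2 fun j hj => h (by grind)
  rw [hφ, hφ, hwindow]

end CellularAutomata

section GenericLimitSet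

lemma frequently_residual_of_eventually_nhds {X : Type*} [TopologicalSpace X] [BaireSpace X]
    {p : X → Prop} {x : X} (h : ∀ᶠ y in 𝓝 x, p y) : ∃ᶠ y in residual X, p y := by
  intro hp
  obtain ⟨y, hy, hpy⟩ := (dense_of_mem_residual hp).inter_nhds_nonempty h
  exact hy hpy

variable [TopologicalSpace A] {f : (ℤ → A) → ℤ → A}

lemma isClosed_genLimitSet (f : (ℤ → A) → ℤ → A) : IsClosed (genLimitSet f) :=
  isClosed_sInter fun _ hC => hC.1

lemma realm_genLimitSet_mem_residual [SecondCountableTopology A] (f : (ℤ → A) → ℤ → A) :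
    realm f (genLimitSet f) ∈ residual (ℤ → A) := by
  set 𝒞 : Set (Set (ℤ → A)) := {C | IsClosed C ∧ realm f C ∈ residual (ℤ → A)}
  obtain ⟨𝒯, h𝒯, h𝒯𝒞, hunion⟩ := TopologicalSpace.isOpen_sUnion_countable (compl '' 𝒞)
    (forall_mem_image.2 fun _ hC => hC.1.isOpen_compl)
  have hrealm : ⋂ U ∈ 𝒯, realm f Uᶜ ∈ residual (ℤ → A) := by
    refine (countable_bInter_mem h𝒯).2 fun U hU => ?_
    obtain ⟨C, hC, rfl⟩ := h𝒯𝒞 hU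
    rw [compl_compl]
    exact hC.2
  refine mem_of_superset hrealm fun x hx y hy C hC => by_contra fun hyC => ?_
  obtain ⟨U, hU, hyU⟩ : y ∈ ⋃₀ 𝒯 := hunion ▸ mem_sUnion_of_mem hyC (mem_image_of_mem compl hC)
  exact mem_iInter₂.1 hx U hU hy hyU

lemma IsCA.mapsTo_translate_genLimitSet (hf : IsCA f) (k : ℤ) :
    MapsTo (translate k) (genLimitSet f) (genLimitSet f) := by
  rintro x hx C ⟨hC, hCres⟩
  refine hx (translate k ⁻¹' C) ⟨hC.preimage (continuous_translate k), ?_⟩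
  have hres : translate k ⁻¹' realm f C ∈ residual (ℤ → A) :=
    tendsto_residual_of_isOpenMap (continuous_translate k) (isOpenMap_translate k) hCres
  refine mem_of_superset hres fun z hz y hy => hz ?_
  have hcluster := hy.continuousAt_comp (continuous_translate k).continuousAt
  simpa only [omegaSet, mem_ofPred_eq, comp_def, hf.iterate_translate] using hcluster

lemma eventually_iterate_mem_of_omegaSet_subset [CompactSpace A] {x : ℤ → A}
    {U : Set (ℤ → A)} (hU : IsOpen U) (hx : omegaSet f x ⊆ U) : ∀ᶠ t in atTop, f^[t] x ∈ U := by
  by_contra h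
  obtain ⟨y, hyU, hy⟩ :=
    hU.isClosed_compl.isCompact.exists_mapClusterPt_of_frequently (not_eventually.1 h)
  exact hyU (hx hy)

lemma frequently_iterate_mem_of_mem_genLimitSet {y : ℤ → A} (hy : y ∈ genLimitSet f)
    {U : Set (ℤ → A)} (hU : IsOpen U) (hyU : y ∈ U) :
    ∃ᶠ x in residual (ℤ → A), ∃ᶠ t in atTop, f^[t] x ∈ U := by
  intro h
  refine hy Uᶜ ⟨hU.isClosed_compl, mem_of_superset h fun x hx z hz hzU => hx ?_⟩ hyU
  exact hz.frequently (hU.mem_nhds hzU)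

lemma mem_lang_genLimitSet_iff [Finite A] [DiscreteTopology A] {s : List A} :
    s ∈ lang (genLimitSet f) ↔
      ∃ i, ∃ᶠ x in residual (ℤ → A), ∃ᶠ t in atTop, f^[t] x ∈ cylinder s i := by
  constructor
  · rintro ⟨y, hy, i, hyi⟩
    exact ⟨i, frequently_iterate_mem_of_mem_genLimitSet hy (isClopen_cylinder s i).isOpen hyi⟩
  · rintro ⟨i, h⟩
    obtain ⟨x, hx, hxrealm⟩ := (h.and_eventually (realm_genLimitSet_mem_residual f)).exists
    obtain ⟨y, hyi, hy⟩ :=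
      (isClopen_cylinder s i).isClosed.isCompact.exists_mapClusterPt_of_frequently hx
    exact ⟨y, hxrealm hy, i, hyi⟩

end GenericLimitSet

section Equicontinuity

lemma eq_of_forall_ge_add_eq {β : Type*} {a b : ℕ → β} {t₁ t₂ T : ℕ} (ht : t₁ < t₂)
    (ha : ∀ t ≥ T, a (t + t₁) = a (t + t₂)) (hb : ∀ t ≥ T, b (t + t₁) = b (t + t₂))
    (hab : ∀ t < T + t₂, a t = b t) : a = b := by
  funext t
  induction t using Nat.strong_induction_on with
  | h t ih =>
    obtain h | h := lt_or_ge t (T + t₂)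
    · exact hab t h
    · obtain ⟨s, rfl⟩ := Nat.exists_eq_add_of_le' (le_of_add_le_right h)
      rw [← ha s (by omega), ← hb s (by omega), ih (s + t₁) (by omega)]

variable {f : (ℤ → A) → ℤ → A}

lemma eventually_residual_eventually_nhds_forall_ge_mem [Finite A] [TopologicalSpace A]
    [DiscreteTopology A] (hf : Continuous f) {O : Set (ℤ → A)} (hO : IsClopen O)
    (hgen : genLimitSet f ⊆ O) :
    ∀ᶠ x in residual (ℤ → A), ∃ T, ∀ᶠ y in 𝓝 x, ∀ t ≥ T, f^[t] y ∈ O := by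
  let C (T : ℕ) : Set (ℤ → A) := {y | ∀ t ≥ T, f^[t] y ∈ O}
  have hC (T : ℕ) : IsClosed (C T) := by
    have hinter : C T = ⋂ t ≥ T, f^[t] ⁻¹' O := by ext; simp [C]
    rw [hinter]
    exact isClosed_biInter fun t _ => hO.isClosed.preimage (hf.iterate t)
  have hcover : realm f (genLimitSet f) ⊆ ⋃ T, C T := fun x hx =>
    mem_iUnion.2 (eventually_atTop.1
      (eventually_iterate_mem_of_omegaSet_subset hO.isOpen (hx.trans hgen)))
  obtain ⟨G, hG, hGδ, hGdense⟩ := mem_residual.1 (realm_genLimitSet_mem_residual f)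
  refine mem_of_superset (residual_of_dense_open (isOpen_iUnion fun T => isOpen_interior)
    (hGδ.dense_iUnion_interior_of_closed hGdense hC (hG.trans hcover))) fun x hx => ?_
  obtain ⟨T, hT⟩ := mem_iUnion.1 hx
  exact ⟨T, mem_interior_iff_mem_nhds.1 hT⟩

variable [Finite A] [UniformSpace A] [DiscreteTopology A]

-- The value at the cell `0` of each iterate depends on a window which is independent of the time,
-- so there are only finitely many functions it can be.
lemma IsCA.exists_eqOn_iterate_genLimitSet [Nonempty A] (hf : IsCA f)
    (hequi : Equicontinuous fun (t : ℕ) (x : genLimitSet f) => f^[t] x.val) :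
    ∃ t₁ t₂, t₁ < t₂ ∧ EqOn f^[t₁] f^[t₂] (genLimitSet f) := by
  have : CompactSpace (genLimitSet f) :=
    isCompact_iff_compactSpace.1 (isClosed_genLimitSet f).isCompact
  have hbasis := hasBasis_uniformity_window.comap
    fun q : genLimitSet f × genLimitSet f => ((q.1 : ℤ → A), (q.2 : ℤ → A))
  rw [← uniformity_subtype] at hbasis
  obtain ⟨n, -, hn⟩ := (hbasis.uniformEquicontinuous_iff hasBasis_uniformity_window).1
    (CompactSpace.uniformEquicontinuous_of_equicontinuous hequi) 0 trivial
  have hfactor (t : ℕ) : ∃ e : (Fin (2 * n + 1) → A) → A,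
      (fun x : genLimitSet f => f^[t] x.val 0) = e ∘ fun x => window n x.val :=
    (factorsThrough_iff _).1 fun x y hxy =>
      window_eq_window_iff.1 (hn x y hxy t) ⟨le_rfl, le_rfl⟩
  choose e he using hfactor
  obtain ⟨t₁, -, t₂, -, ht, het⟩ :=
    infinite_univ.exists_lt_map_eq_of_mapsTo (mapsTo_univ e univ) finite_univ
  have hzero {x : ℤ → A} (hx : x ∈ genLimitSet f) : f^[t₁] x 0 = f^[t₂] x 0 :=
    congrFun ((he t₁).trans (het ▸ (he t₂).symm)) ⟨x, hx⟩
  refine ⟨t₁, t₂, ht, fun x hx => funext fun i => ?_⟩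
  simpa only [hf.iterate_translate, translate_apply, zero_add]
    using hzero (hf.mapsTo_translate_genLimitSet i hx)

lemma eventually_residual_equicontinuousAt (hf : Continuous f) {t₁ t₂ : ℕ} (ht : t₁ < t₂)
    (h : EqOn f^[t₁] f^[t₂] (genLimitSet f)) :
    ∀ᶠ x in residual (ℤ → A), EquicontinuousAt (fun t : ℕ => f^[t]) x := by
  simp only [hasBasis_uniformity_window.equicontinuousAt_iff_right, true_imp_iff]
  refine eventually_countable_forall.2 fun n => ?_
  have hcont (t : ℕ) : Continuous fun x => window n (f^[t] x) :=
    (continuous_window n).comp (hf.iterate t)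
  have hclopen : IsClopen {x | window n (f^[t₁] x) = window n (f^[t₂] x)} :=
    (isClopen_discrete {q : (Fin (2 * n + 1) → A) × (Fin (2 * n + 1) → A) | q.1 = q.2}).preimage
      ((hcont t₁).prodMk (hcont t₂))
  filter_upwards [eventually_residual_eventually_nhds_forall_ge_mem hf hclopen
    fun x hx => congrArg (window n) (h hx)] with x ⟨T, hT⟩
  have hstart : ∀ᶠ y in 𝓝 x, ∀ t ∈ Iio (T + t₂), window n (f^[t] x) = window n (f^[t] y) :=
    (eventually_all_finite (finite_Iio _)).2 fun t _ =>
      ((isOpen_discrete {p | window n (f^[t] x) = p}).preimage (hcont t)).mem_nhds rfl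
  simp only [← iterate_add_apply, add_comm t₁, add_comm t₂] at hT
  filter_upwards [hT, hstart] with y hy hxy
  exact congrFun (eq_of_forall_ge_add_eq ht hT.self_of_nhds hy hxy)

lemma IsCA.exists_equicontinuousAt [Nonempty A] (hf : IsCA f)
    (hequi : Equicontinuous fun (t : ℕ) (x : genLimitSet f) => f^[t] x.val) :
    ∃ x, EquicontinuousAt (fun t : ℕ => f^[t]) x := by
  obtain ⟨t₁, t₂, ht, heq⟩ := hf.exists_eqOn_iterate_genLimitSet hequi
  exact (dense_of_mem_residual (eventually_residual_equicontinuousAt hf.1 ht heq)).nonempty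

end Equicontinuity

section Blocking

variable {f : (ℤ → A) → ℤ → A} {r p : ℕ} {w s : List A}

/-- A word `w` is blocking for `f`, with width `r` and offset `p`: an occurrence of `w` at
position `i` determines the cells `i + p, …, i + p + r - 1` at all times. When `r` is a radius of
`f`, no information crosses these cells. -/
def IsBlocking (f : (ℤ → A) → ℤ → A) (r p : ℕ) (w : List A) : Prop :=
  ∀ ⦃i : ℤ⦄ ⦃x y : ℤ → A⦄, x ∈ cylinder w i → y ∈ cylinder w i →
    ∀ t, EqOn (f^[t] x) (f^[t] y) (Ico (i + p) (i + p + r))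

lemma IsBlocking.eqOn_iterate {φ : (Fin (2 * r + 1) → A) → A} (hw : IsBlocking f r p w)
    (hφ : IsLocalRule f φ) {a b : ℤ} {x y : ℤ → A} (hxa : x ∈ cylinder w a)
    (hya : y ∈ cylinder w a) (hxb : x ∈ cylinder w b) (hyb : y ∈ cylinder w b)
    (hxy : EqOn x y (Ico (a + p) (b + p + r))) (t : ℕ) :
    EqOn (f^[t] x) (f^[t] y) (Ico (a + p) (b + p + r)) := by
  induction t with
  | zero => exact hxy
  | succ t ih =>
    rintro i ⟨hai, hib⟩
    obtain hleft | hleft := lt_or_ge i (a + p + r)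
    · exact hw hxa hya (t + 1) ⟨hai, hleft⟩
    obtain hright | hright := le_or_gt (b + p) i
    · exact hw hxb hyb (t + 1) ⟨hright, hib⟩
    rw [iterate_succ_apply', iterate_succ_apply']
    exact hφ.apply_congr (ih.mono fun j hj => by grind)

lemma IsBlocking.iterate_mem_cylinder_iff {φ : (Fin (2 * r + 1) → A) → A}
    (hw : IsBlocking f r p w) (hφ : IsLocalRule f φ) {a b i : ℤ} {x y : ℤ → A} (hab : a ≤ b)
    (hxa : x ∈ cylinder w a) (hxb : x ∈ cylinder w b)
    (hxy : EqOn x y (Ico a (b + p + r + w.length))) (hai : a + p ≤ i)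
    (hib : i + s.length ≤ b + p + r) (t : ℕ) :
    f^[t] x ∈ cylinder s i ↔ f^[t] y ∈ cylinder s i := by
  have hya : y ∈ cylinder w a := (mem_cylinder_congr (hxy.mono fun j hj => by grind)).1 hxa
  have hyb : y ∈ cylinder w b := (mem_cylinder_congr (hxy.mono fun j hj => by grind)).1 hxb
  have hmid : EqOn x y (Ico (a + p) (b + p + r)) := hxy.mono fun j hj => by grind
  exact mem_cylinder_congr
    ((hw.eqOn_iterate hφ hxa hya hxb hyb hmid t).mono (Ico_subset_Ico hai hib))

variable [Finite A] [UniformSpace A] [DiscreteTopology A]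

lemma IsCA.exists_isBlocking (hf : IsCA f) {x₀ : ℤ → A}
    (hx₀ : EquicontinuousAt (fun t : ℕ => f^[t]) x₀) (r : ℕ) :
    ∃ p w, w ≠ [] ∧ IsBlocking f r p w := by
  obtain ⟨m, -, hm⟩ := ((hasBasis_nhds_window x₀).equicontinuousAt_iff
    hasBasis_uniformity_window).1 hx₀ r trivial
  let w := word x₀ (-m) (2 * m + 1)
  have hiterate {i : ℤ} {x : ℤ → A} (hx : x ∈ cylinder w i) (t : ℕ) {j : ℤ}
      (hj : j ∈ Ico (i + m) (i + m + r)) : f^[t] x j = f^[t] x₀ (j - (i + m)) := by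
    have hwindow : window m x₀ = window m (translate (i + m) x) := by
      funext k
      have hk := mem_cylinder_word_iff.1 hx k k.2
      grind [window, translate_apply]
    have hxx₀ : f^[t] x₀ (j - (i + m)) = f^[t] (translate (i + m) x) (j - (i + m)) :=
      window_eq_window_iff.1 (hm _ hwindow t) (by grind)
    rw [hxx₀, hf.iterate_translate, translate_apply, sub_add_cancel]
  refine ⟨m, w, List.ne_nil_of_length_pos (by grind [length_word]), fun i x y hx hy t j hj => ?_⟩
  rw [hiterate hx t hj, hiterate hy t hj]

lemma eventually_residual_exists_mem_cylinder (w : List A) {S : Set ℤ} (hS : S.Infinite) :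
    ∀ᶠ x in residual (ℤ → A), ∃ a ∈ S, x ∈ cylinder w a := by
  have hopen : IsOpen {x : ℤ → A | ∃ a ∈ S, x ∈ cylinder w a} := by
    have hunion : {x : ℤ → A | ∃ a ∈ S, x ∈ cylinder w a} = ⋃ a ∈ S, cylinder w a := by
      ext
      simp
    rw [hunion]
    exact isOpen_biUnion fun a _ => (isClopen_cylinder w a).isOpen
  refine residual_of_dense_open hopen fun x => ?_
  refine (mem_closure_iff_nhds_basis (hasBasis_nhds_window x)).2 fun n _ => ?_
  obtain ⟨a, haS, ha⟩ := hS.exists_notMem_finite (finite_Icc (-n - w.length : ℤ) n)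
  obtain ⟨y, hyw, hxy⟩ := exists_mem_cylinder_eqOn w x a
  exact ⟨y, ⟨a, haS, hyw⟩, window_eq_window_iff.2 (hxy.mono fun j hj => by grind)⟩

end Blocking

section PeriodicConfigurations

lemma apply_emod_of_periodic {x : ℤ → A} {L : ℤ} (hx : Periodic x L) (i : ℤ) :
    x (i % L) = x i := by
  rw [Int.emod_def, mul_comm]
  exact hx.sub_int_mul_eq (i / L)

lemma mem_cylinder_add_mul_iff {x : ℤ → A} {L : ℤ} (hx : Periodic x L) {w : List A} {i : ℤ}
    (k : ℤ) : x ∈ cylinder w (i + k * L) ↔ x ∈ cylinder w i := by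
  have htranslate : translate (k * L) x = x := funext (hx.int_mul k)
  rw [← translate_mem_cylinder_iff, htranslate]

variable [Inhabited A]

/-- The periodic configuration `…yyy…` in which one of the copies of `y` starts at position `0`.
It is constant with value `default` if `y` is empty. -/
def periodize (y : List A) : ℤ → A := fun i => y.getI (i % y.length).toNat

lemma periodic_periodize (y : List A) : Periodic (periodize y) y.length := fun i => by
  rw [periodize, Int.add_emod_right, periodize]

lemma periodize_natCast (y : List A) (k : ℕ) : periodize y k = y.getI (k % y.length) := by
  rw [periodize, ← Int.natCast_mod, Int.toNat_natCast]

lemma periodize_natCast_of_lt {y : List A} {k : ℕ} (hk : k < y.length) :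
    periodize y k = y[k] := by
  rw [periodize_natCast, Nat.mod_eq_of_lt hk, List.getI_eq_getElem y hk]

lemma periodize_append_mem_cylinder (w u : List A) : periodize (w ++ u) ∈ cylinder w 0 :=
  mem_cylinder_iff.2 fun k hk => by
    rw [zero_add, periodize_natCast_of_lt (by grind), List.getElem_append_left hk]

lemma eqOn_periodize_word (x : ℤ → A) (n : ℕ) :
    EqOn (periodize (word x 0 n)) x (Ico 0 n) := by
  rintro i ⟨hi, hin⟩
  lift i to ℕ using hi
  rw [periodize_natCast_of_lt (by grind [length_word])]
  simp [word_eq_map]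

lemma periodize_word_of_periodic {x : ℤ → A} {n : ℕ} (hx : Periodic x n) (hn : 0 < n) :
    periodize (word x 0 n) = x := by
  have hn₀ : (n : ℤ) ≠ 0 := by omega
  have hy : Periodic (periodize (word x 0 n)) n := by
    simpa only [length_word] using periodic_periodize (word x 0 n)
  funext i
  rw [← apply_emod_of_periodic hy, ← apply_emod_of_periodic hx]
  exact eqOn_periodize_word x n ⟨Int.emod_nonneg i hn₀, Int.emod_lt_of_pos i (by omega)⟩

/-- One step of `f` on the cyclic word `y`, that is, on a period of the configuration
`periodize y`. -/
def cyclicStep (f : (ℤ → A) → ℤ → A) (y : List A) : List A := word (f (periodize y)) 0 y.length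

variable {f : (ℤ → A) → ℤ → A}

lemma length_cyclicStep_iterate (f : (ℤ → A) → ℤ → A) (y : List A) (t : ℕ) :
    ((cyclicStep f)^[t] y).length = y.length := by
  induction t with
  | zero => rfl
  | succ t ih => rw [iterate_succ_apply', cyclicStep, length_word, ih]

lemma IsCA.periodize_cyclicStep_iterate [TopologicalSpace A] (hf : IsCA f) {y : List A}
    (hy : y ≠ []) (t : ℕ) : periodize ((cyclicStep f)^[t] y) = f^[t] (periodize y) := by
  induction t with
  | zero => rfl
  | succ t ih =>
    have hper := hf.periodic_iterate (periodic_periodize y) (t + 1)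
    rw [iterate_succ_apply', cyclicStep, length_cyclicStep_iterate, ih, ← iterate_succ_apply' f,
      periodize_word_of_periodic hper (List.length_pos_iff.2 hy)]

variable {r p : ℕ} {φ : (Fin (2 * r + 1) → A) → A} {w s : List A}
  [Finite A] [UniformSpace A] [DiscreteTopology A]

lemma IsBlocking.exists_frequently_periodize_of_mem_lang (hf : IsCA f) (hw : IsBlocking f r p w)
    (hφ : IsLocalRule f φ) (hs : s ∈ lang (genLimitSet f)) :
    ∃ (u : List A) (j : ℕ), ∃ᶠ t in atTop, f^[t] (periodize (w ++ u)) ∈ cylinder s j := by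
  obtain ⟨i, hi⟩ := mem_lang_genLimitSet_iff.1 hs
  obtain ⟨x, ⟨hx, a, ha, hxa⟩, b, hb, hxb⟩ :=
    ((hi.and_eventually (eventually_residual_exists_mem_cylinder w
      (Iic_infinite (i - p)))).and_eventually (eventually_residual_exists_mem_cylinder w
      (Ici_infinite (i + s.length)))).exists
  rw [mem_Iic] at ha
  rw [mem_Ici] at hb
  obtain ⟨j, hj⟩ := Int.eq_ofNat_of_zero_le (show 0 ≤ i - a by omega)
  obtain ⟨d, hd⟩ := Int.eq_ofNat_of_zero_le (show 0 ≤ b - a by omega)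
  let x₁ := translate a x
  let u := word x₁ w.length (d + p + r)
  have hx₁a : x₁ ∈ cylinder w 0 := translate_mem_cylinder_iff.2 (by rwa [zero_add])
  have hx₁b : x₁ ∈ cylinder w d := translate_mem_cylinder_iff.2 (by rwa [← hd, sub_add_cancel])
  have hperiod : word x₁ 0 (w.length + (d + p + r)) = w ++ u := by
    rw [word_add, zero_add, show word x₁ 0 w.length = w from hx₁a]
  have hagree : EqOn x₁ (periodize (w ++ u)) (Ico 0 (d + p + r + w.length)) := by
    rw [← hperiod]
    exact (eqOn_periodize_word x₁ _).symm.mono fun k hk => by grind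
  refine ⟨u, j, hx.mono fun t ht => ?_⟩
  rw [← hw.iterate_mem_cylinder_iff hφ (by omega) hx₁a hx₁b hagree (by omega) (by omega),
    hf.iterate_translate, translate_mem_cylinder_iff, ← hj, sub_add_cancel]
  exact ht

lemma IsBlocking.mem_lang_of_frequently_periodize (hw : IsBlocking f r p w)
    (hφ : IsLocalRule f φ) (hw₀ : w ≠ []) {u : List A} {j : ℕ}
    (h : ∃ᶠ t in atTop, f^[t] (periodize (w ++ u)) ∈ cylinder s j) :
    s ∈ lang (genLimitSet f) := by
  set z := periodize (w ++ u)
  set L := (w ++ u).length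
  have hL : 0 < L := List.length_pos_iff.2 (List.append_ne_nil_of_left_ne_nil hw₀ u)
  let K := j + s.length + p
  have hKL : (K : ℤ) ≤ K * L := by
    exact_mod_cast Nat.le_mul_of_pos_right K hL
  have hz (k : ℤ) : z ∈ cylinder w (k * L) := by
    rw [← zero_add (k * (L : ℤ)), mem_cylinder_add_mul_iff (periodic_periodize _)]
    exact periodize_append_mem_cylinder w u
  have hnear : ∀ᶠ y in 𝓝 z, window (K * L + p + r + w.length) z =
      window (K * L + p + r + w.length) y := (hasBasis_nhds_window z).mem_of_mem trivial
  refine mem_lang_genLimitSet_iff.2 ⟨j, frequently_residual_of_eventually_nhds (x := z) ?_⟩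
  filter_upwards [hnear] with y hzy
  have hagree : EqOn z y (Ico (-K * L) (K * L + p + r + w.length)) :=
    (window_eq_window_iff.1 hzy).mono fun k hk => by grind
  exact h.mono fun t =>
    (hw.iterate_mem_cylinder_iff hφ (by grind) (hz (-K)) (hz K) hagree (by grind) (by grind) t).1

end PeriodicConfigurations

section Certificates

lemma frequently_iterate_mem_iff {α : Type*} {g : α → α} {x : α} {S : Set α}
    (hfin : (range fun t : ℕ => g^[t] x).Finite) :
    (∃ᶠ t in atTop, g^[t] x ∈ S) ↔
      ∃ t n, 0 < n ∧ IsPeriodicPt g n (g^[t] x) ∧ g^[t] x ∈ S := by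
  constructor
  · intro h
    have hinf : {t | g^[t] x ∈ S}.Infinite := Nat.frequently_atTop_iff_infinite.1 h
    obtain ⟨t, ht, t₁, -, htt₁, heq⟩ :=
      hinf.exists_lt_map_eq_of_mapsTo (fun t _ => mem_range_self t) hfin
    refine ⟨t, t₁ - t, Nat.sub_pos_of_lt htt₁, ?_, ht⟩
    rw [IsPeriodicPt, IsFixedPt, ← iterate_add_apply, Nat.sub_add_cancel htt₁.le]
    exact heq.symm
  · rintro ⟨t, n, hn, hper, ht⟩
    refine frequently_atTop.2 fun N => ⟨N * n + t, ?_, ?_⟩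
    · exact (Nat.le_mul_of_pos_right N hn).trans (Nat.le_add_right _ t)
    · rwa [iterate_add_apply, (hper.const_mul N).eq]

variable [Inhabited A] {f : (ℤ → A) → ℤ → A} {r p : ℕ} {φ : (Fin (2 * r + 1) → A) → A}
  {w s : List A}

/-- `(u, j, t, n)` certifies that, on the cyclic word `w ++ u`, the word `s` occurs at position `j`
at infinitely many times: it occurs there at time `t`, when the orbit has entered a cycle whose
length divides `n > 0`. -/
def IsCertificate (f : (ℤ → A) → ℤ → A) (w s : List A) : List A × ℕ × ℕ × ℕ → Prop :=
  fun (u, j, t, n) => 0 < n ∧ IsPeriodicPt (cyclicStep f) n ((cyclicStep f)^[t] (w ++ u)) ∧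
    periodize ((cyclicStep f)^[t] (w ++ u)) ∈ cylinder s j

lemma frequently_iterate_periodize_mem_cylinder_iff [Finite A] [TopologicalSpace A] (hf : IsCA f)
    (hw₀ : w ≠ []) {u : List A} {j : ℕ} :
    (∃ᶠ t in atTop, f^[t] (periodize (w ++ u)) ∈ cylinder s j) ↔
      ∃ t n, IsCertificate f w s (u, j, t, n) := by
  have hfin : (range fun t : ℕ => (cyclicStep f)^[t] (w ++ u)).Finite :=
    (List.finite_length_eq A (w ++ u).length).subset
      (range_subset_iff.2 (length_cyclicStep_iterate f (w ++ u)))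
  simp only [← hf.periodize_cyclicStep_iterate (List.append_ne_nil_of_left_ne_nil hw₀ u)]
  exact frequently_iterate_mem_iff (S := {y | periodize y ∈ cylinder s j}) hfin

lemma IsBlocking.mem_lang_genLimitSet_iff [Finite A] [UniformSpace A] [DiscreteTopology A]
    (hf : IsCA f) (hw : IsBlocking f r p w) (hφ : IsLocalRule f φ) (hw₀ : w ≠ []) :
    s ∈ lang (genLimitSet f) ↔ ∃ c, IsCertificate f w s c := by
  simp only [Prod.exists, ← frequently_iterate_periodize_mem_cylinder_iff hf hw₀]
  exact ⟨hw.exists_frequently_periodize_of_mem_lang hf hφ,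
    fun ⟨_, _, h⟩ => hw.mem_lang_of_frequently_periodize hφ hw₀ h⟩

end Certificates

section Computability

lemma word_periodize_natCast [Inhabited A] (y : List A) (j n : ℕ) :
    word (periodize y) j n = (List.range n).map fun k => y.getI ((j + k) % y.length) := by
  rw [word_eq_map]
  exact List.map_congr_left fun k _ => by rw [← Nat.cast_add, periodize_natCast]

-- The index `i + k - r` is replaced by a natural number congruent to it modulo `y.length`.
lemma IsLocalRule.cyclicStep_eq [Inhabited A] {f : (ℤ → A) → ℤ → A} {r : ℕ}
    {φ : (Fin (2 * r + 1) → A) → A} (hφ : IsLocalRule f φ) (y : List A) :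
    cyclicStep f y = (List.range y.length).map fun i =>
      φ fun k => y.getI ((i + k + (y.length - 1) * r) % y.length) := by
  rw [cyclicStep, word_eq_map]
  refine List.map_congr_left fun i hi => ?_
  rw [hφ]
  congr 1
  funext k
  rw [← periodize_natCast, window, translate_apply,
    ← (periodic_periodize y).nat_mul r ((k : ℤ) - r + (0 + i))]
  congr 1
  rw [List.mem_range] at hi
  push_cast [Nat.cast_pred (Nat.zero_lt_of_lt hi)]
  ring

variable [Primcodable A]

lemma primrecPred_exists_encode_eq {α : Type*} [Primcodable α] {Q : α → Prop}
    (hQ : PrimrecPred Q) : PrimrecPred fun m => ∃ a, Encodable.encode a = m ∧ Q a := by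
  obtain ⟨_, hQ⟩ := hQ
  have hdecode : PrimrecPred fun m =>
      ((Encodable.decode₂ α m).map fun a => decide (Q a)) = some true :=
    Primrec.eq.comp ((Primrec.option_map₁ hQ).comp Primrec.decode₂) (Primrec.const _)
  refine hdecode.of_eq fun m => ?_
  rw [Option.map_eq_some_iff]
  exact exists_congr fun a => and_congr Encodable.mem_decode₂ decide_eq_true_iff

lemma sigmaLang_one_of_primrecPred {K : Type*} [Primcodable K] {P : Set (List A)}
    {Q : List A × K → Prop} (hQ : PrimrecPred Q) (hP : ∀ s, s ∈ P ↔ ∃ k, Q (s, k)) :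
    SigmaLang 1 P := by
  refine ⟨fun m => ∃ q : List A × K, Encodable.encode q = m ∧ Q q,
    (primrecPred_exists_encode_eq hQ).not.computablePred, fun m => ?_⟩
  constructor
  · rintro ⟨s, rfl, hs⟩
    obtain ⟨k, hk⟩ := (hP s).1 hs
    exact ⟨Encodable.encode k, (s, k), Encodable.encode_prod_val s k, hk⟩
  · rintro ⟨n, ⟨s, k⟩, hsk, hQsk⟩
    rw [Encodable.encode_prod_val, Nat.pair_eq_pair] at hsk
    exact ⟨s, hsk.1, (hP s).2 ⟨k, hQsk⟩⟩

lemma sigmaLang_one_lang_of_isEmpty [IsEmpty A] (X : Set (ℤ → A)) : SigmaLang 1 (lang X) := by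
  have hfalse : PrimrecPred fun _ : List A × ℕ => False :=
    (Primrec.eq.comp (Primrec.const 0) (Primrec.const 1)).of_eq fun _ => by simp
  refine sigmaLang_one_of_primrecPred hfalse fun s => ?_
  simp only [exists_false, iff_false]
  rintro ⟨x, -⟩
  exact isEmptyElim (x 0)

variable [Inhabited A] {f : (ℤ → A) → ℤ → A} {r : ℕ} {φ : (Fin (2 * r + 1) → A) → A}

lemma primrec_getI_mod_length : Primrec₂ fun (y : List A) (i : ℕ) => y.getI (i % y.length) :=
  Primrec.list_getI.comp Primrec.fst
    (Primrec.nat_mod.comp Primrec.snd (Primrec.list_length.comp Primrec.fst))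

lemma primrec_word_periodize :
    Primrec fun q : List A × ℕ × ℕ => word (periodize q.1) q.2.1 q.2.2 := by
  simp only [word_periodize_natCast]
  refine Primrec.list_map (Primrec.list_range.comp (Primrec.snd.comp Primrec.snd)) ?_
  exact primrec_getI_mod_length.comp (Primrec.fst.comp Primrec.fst)
    (Primrec.nat_add.comp (Primrec.fst.comp (Primrec.snd.comp Primrec.fst)) Primrec.snd)

variable [Finite A]

lemma IsLocalRule.primrec_cyclicStep (hφ : IsLocalRule f φ) : Primrec (cyclicStep f) := by
  have hindex : Primrec fun q : (List A × ℕ) × Fin (2 * r + 1) =>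
      q.1.2 + q.2 + (q.1.1.length - 1) * r :=
    Primrec.nat_add.comp
      (Primrec.nat_add.comp (Primrec.snd.comp Primrec.fst) (Primrec.fin_val.comp Primrec.snd))
      (Primrec.nat_mul.comp (Primrec.pred.comp
        (Primrec.list_length.comp (Primrec.fst.comp Primrec.fst))) (Primrec.const r))
  have hwindow : Primrec₂ fun (q : List A × ℕ) (k : Fin (2 * r + 1)) =>
      q.1.getI ((q.2 + k + (q.1.length - 1) * r) % q.1.length) :=
    primrec_getI_mod_length.comp (Primrec.fst.comp Primrec.fst) hindex
  refine (Primrec.list_map (Primrec.list_range.comp Primrec.list_length) ?_).of_eq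
    fun y => (hφ.cyclicStep_eq y).symm
  exact (Primrec.dom_finite φ).comp (Primrec.fin_curry.2 hwindow)

lemma IsLocalRule.primrecPred_isCertificate (hφ : IsLocalRule f φ) (w : List A) :
    PrimrecPred fun q : List A × List A × ℕ × ℕ × ℕ => IsCertificate f w q.1 q.2 := by
  have hs : Primrec fun q : List A × List A × ℕ × ℕ × ℕ => q.1 := Primrec.fst
  have hu : Primrec fun q : List A × List A × ℕ × ℕ × ℕ => q.2.1 := Primrec.fst.comp Primrec.snd
  have hjtn : Primrec fun q : List A × List A × ℕ × ℕ × ℕ => q.2.2 := Primrec.snd.comp Primrec.snd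
  have hj := Primrec.fst.comp hjtn
  have ht := Primrec.fst.comp (Primrec.snd.comp hjtn)
  have hn := Primrec.snd.comp (Primrec.snd.comp hjtn)
  have hstep : Primrec₂ fun (_ : List A × List A × ℕ × ℕ × ℕ) y => cyclicStep f y :=
    hφ.primrec_cyclicStep.comp Primrec.snd
  have hy := Primrec.nat_iterate ht (Primrec.list_append.comp (Primrec.const w) hu) hstep
  have hpos := Primrec.nat_lt.comp (Primrec.const 0) hn
  have hper := Primrec.eq.comp (Primrec.nat_iterate hn hy hstep) hy
  have hocc := Primrec.eq.comp
    (primrec_word_periodize.comp (hy.pair (hj.pair (Primrec.list_length.comp hs)))) hs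
  exact hpos.and (hper.and hocc)

end Computability

theorem stmt7_general [Finite A] [Primcodable A] [UniformSpace A] [DiscreteTopology A]
    {f : (ℤ → A) → ℤ → A} (hf : IsCA f) {x : ℤ → A}
    (hx : EquicontinuousAt (fun t : ℕ => f^[t]) x) : SigmaLang 1 (lang (genLimitSet f)) := by
  have : Inhabited A := ⟨x 0⟩
  obtain ⟨r, φ, hφ⟩ := hf.exists_isLocalRule
  obtain ⟨p, w, hw₀, hw⟩ := hf.exists_isBlocking hx r
  exact sigmaLang_one_of_primrecPred (hφ.primrecPred_isCertificate w)
    fun s => hw.mem_lang_genLimitSet_iff hf hφ hw₀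

/-- if the family of iterates of `f` restricted to `ω̃(f)` is equicontinuous,
then the language of `ω̃(f)` is `Σ⁰₁` (computably enumerable). -/
theorem stmt7 [Fintype A] [Primcodable A] [UniformSpace A] [DiscreteTopology A]
    (f : (ℤ → A) → (ℤ → A)) (hf : IsCA f)
    (hequi : Equicontinuous fun (t : ℕ) (x : genLimitSet f) => f^[t] x.val) :
    SigmaLang 1 (lang (genLimitSet f)) := by
  obtain hA | hA := isEmpty_or_nonempty A
  · exact sigmaLang_one_lang_of_isEmpty _
  · obtain ⟨x, hx⟩ := hf.exists_equicontinuousAt hequi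
    exact stmt7_general hf hx

end Gls
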